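/- Every additive preorder on ℤ^r that is a total order (i.e., antisymmetric) is determined by lexicographic comparison of values under s linear forms v_1,…,v_s whose real span is not contained in any rational hyperplane; conversely, if vectors v_1,…,v_s ∈ ℝ^r span a subspace not contained in any rational hyperplane, then the relation m ≼ n iff (⟨m,v_1⟩,…,⟨m,v_s⟩) ≤_lex (⟨n,v_1⟩,…,⟨n,v_s⟩) is an additive total order on ℤ^r. -/

import Mathlib

/-- Lexicographic comparison of two tuples of reals. -/
def lexLE {s : ℕ} (f g : Fin s → ℝ) : Prop :=
  f = g ∨ ∃ i : Fin s, (∀ j : Fin s, j < i → f j = g j) ∧ f i < g i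

/-!
By Hahn's embedding theorem an ordered abelian group `M` embeds into the real Hahn series on its
nontrivial archimedean classes. Elements of pairwise different classes go to series of pairwise
different orders, hence are `ℤ`-linearly independent. So `ℤ^r` has at most `r` classes and listing
the coefficients of a series embeds `ℤ^r` into the lexicographically ordered `ℝ^s` with `s ≤ r`.

A homomorphism `ℤ^r → ℝ^s` is injective iff the images of the standard basis vectors, which are the
columns of the matrix with rows `v₁, …, vₛ`, are independent over `ℤ`, equivalently over `ℚ`; and a
rational relation between these columns is a rational hyperplane containing all the rows.
Conversely, an injective homomorphism to an ordered group pulls its order back to an additive order.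
-/

theorem strictMono_toLex_comp_orderIso {ι κ α : Type*} [LinearOrder ι] [LinearOrder κ]
    [PartialOrder α] (o : ι ≃o κ) :
    StrictMono fun f : Lex (κ → α) ↦ (toLex (ofLex f ∘ o) : Lex (ι → α)) := by
  rintro f g ⟨k, heq, hlt⟩
  refine ⟨o.symm k, fun i hi ↦ heq (o i) (o.lt_symm_apply.1 hi), ?_⟩
  simpa using hlt

theorem linearIndependent_of_injective_orderTop {Γ R V ι : Type*} [LinearOrder Γ] [Ring R]
    [IsDomain R] [AddCommGroup V] [Module R V] [Module.IsTorsionFree R V] {x : ι → HahnSeries Γ V}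
    (hx : ∀ i, x i ≠ 0) (hinj : Function.Injective fun i ↦ (x i).orderTop) :
    LinearIndependent R x := by
  refine linearIndependent_iff.2 fun a ha ↦ ?_
  by_contra ha0
  obtain ⟨i, hi, hmin⟩ :=
    a.support.exists_min_image (fun i ↦ (x i).orderTop) (Finsupp.support_nonempty_iff.2 ha0)
  obtain ⟨g, hg⟩ := WithTop.ne_top_iff_exists.1 (HahnSeries.orderTop_ne_top.2 (hx i))
  have hcoeff_ne : (x i).coeff g ≠ 0 := HahnSeries.coeff_orderTop_ne hg.symm
  have hcoeff_zero : ∀ j ∈ a.support, j ≠ i → a j • (x j).coeff g = 0 := fun j hj hji ↦ by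
    have hlt : (g : WithTop Γ) < (x j).orderTop :=
      hg ▸ (hmin j hj).lt_of_ne (hinj.ne hji.symm)
    rw [HahnSeries.coeff_eq_zero_of_lt_orderTop hlt, smul_zero]
  have hsum : a i • (x i).coeff g = 0 := calc
    a i • (x i).coeff g = ∑ j ∈ a.support, a j • (x j).coeff g :=
      (Finset.sum_eq_single_of_mem i hi hcoeff_zero).symm
    _ = (Finsupp.linearCombination R x a).coeff g := by
      simp [Finsupp.linearCombination_apply, Finsupp.sum]
    _ = 0 := by rw [ha, HahnSeries.coeff_zero]
  exact (smul_ne_zero (Finsupp.mem_support_iff.1 hi) hcoeff_ne) hsum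

section OrderedGroup

variable {M : Type*} [AddCommGroup M] [LinearOrder M] [IsOrderedAddMonoid M]

theorem linearIndependent_of_injective_archimedeanClassMk {ι : Type*} {x : ι → M}
    (hx : ∀ i, x i ≠ 0) (hinj : Function.Injective fun i ↦ ArchimedeanClass.mk (x i)) :
    LinearIndependent ℤ x := by
  obtain ⟨f, hf, hclass⟩ := hahnEmbedding_isOrderedAddMonoid M
  refine .of_comp f.toAddMonoidHom.toIntLinearMap
    (linearIndependent_of_injective_orderTop (x := fun i ↦ ofLex (f (x i))) ?_ ?_)
  · exact fun i ↦ (map_ne_zero_iff f hf).2 (hx i)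
  · exact fun i j hij ↦ hinj (by simp only [hclass, hij])

variable (M)

theorem exists_strictMono_addMonoidHom_lex_finiteArchimedeanClass :
    ∃ φ : M →+ Lex (FiniteArchimedeanClass M → ℝ), StrictMono φ := by
  obtain ⟨f, hf, -⟩ := hahnEmbedding_isOrderedAddMonoid M
  exact ⟨.mk' (fun m ↦ toLex (ofLex (f m)).coeff) fun m n ↦ by simp,
    fun m n hmn ↦ f.monotone'.strictMono_of_injective hf hmn⟩

theorem exists_strictMono_addMonoidHom_lex_fin [Module.Finite ℤ M] :
    ∃ s ≤ Module.finrank ℤ M, ∃ φ : M →+ Lex (Fin s → ℝ), StrictMono φ := by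
  have hout : LinearIndependent ℤ fun c : FiniteArchimedeanClass M ↦ c.val.out :=
    linearIndependent_of_injective_archimedeanClassMk
      (fun c ↦ ArchimedeanClass.mk_eq_top_iff.not.1 (by simpa using c.2))
      (by simp [Subtype.val_injective])
  have := hout.finite
  have := Fintype.ofFinite (FiniteArchimedeanClass M)
  obtain ⟨φ, hφ⟩ := exists_strictMono_addMonoidHom_lex_finiteArchimedeanClass M
  let o := monoEquivOfFin (FiniteArchimedeanClass M) rfl
  exact ⟨_, hout.fintype_card_le_finrank,
    .mk' (fun m ↦ toLex (ofLex (φ m) ∘ o)) fun m n ↦ by rw [map_add]; rfl,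
    (strictMono_toLex_comp_orderIso o).comp hφ⟩

end OrderedGroup

theorem exists_addMonoidHom_lex_of_total {M : Type*} [AddCommGroup M] [Module.Finite ℤ M]
    {R : M → M → Prop} (htrans : ∀ l m n, R l m → R m n → R l n) (htotal : ∀ m n, R m n ∨ R n m)
    (hadd : ∀ m n o, R m n → R (m + o) (n + o)) (hanti : ∀ m n, R m n → R n m → m = n) :
    ∃ s ≤ Module.finrank ℤ M, ∃ φ : M →+ Lex (Fin s → ℝ),
      Function.Injective φ ∧ ∀ m n, R m n ↔ φ m ≤ φ n := by
  let _ : LinearOrder M :=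
    { le := R
      le_refl m := or_self_iff.1 (htotal m m)
      le_trans := htrans
      le_antisymm := hanti
      le_total := htotal
      toDecidableLE := Classical.decRel R }
  have : IsOrderedAddMonoid M := { add_le_add_left := fun m n h o ↦ hadd m n o h }
  obtain ⟨s, hs, φ, hφ⟩ := exists_strictMono_addMonoidHom_lex_fin M
  exact ⟨s, hs, φ, hφ.injective, fun m n ↦ hφ.le_iff_le.symm⟩

section LexForms

variable {ι κ : Type*} [Fintype κ]

/-- The homomorphism `m ↦ (⟨m, vᵢ⟩)ᵢ` from `ℤ^κ` to the lexicographically ordered `ℝ^ι`, for a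
family `v` of vectors in `ℝ^κ`. -/
def lexForms (v : ι → κ → ℝ) : (κ → ℤ) →+ Lex (ι → ℝ) where
  toFun m := toLex fun i ↦ ∑ j, (m j : ℝ) * v i j
  map_zero' := by
    simp only [Pi.zero_apply, Int.cast_zero, zero_mul, Finset.sum_const_zero]
    rfl
  map_add' m n := by
    simp only [Pi.add_apply, Int.cast_add, add_mul, Finset.sum_add_distrib]
    rfl

theorem lexLE_iff_lexForms_le {s : ℕ} (v : Fin s → κ → ℝ) (m n : κ → ℤ) :
    lexLE (fun i ↦ ∑ j, (m j : ℝ) * v i j) (fun i ↦ ∑ j, (n j : ℝ) * v i j) ↔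
      lexForms v m ≤ lexForms v n := by
  rw [le_iff_eq_or_lt]
  rfl

theorem exists_lexForms_eq (φ : (κ → ℤ) →+ Lex (ι → ℝ)) :
    ∃ v : ι → κ → ℝ, lexForms v = φ := by
  classical
  refine ⟨fun i j ↦ φ (Pi.single j 1) i, AddMonoidHom.functions_ext' _ _ _ fun j ↦ ?_⟩
  ext
  funext i
  simp [lexForms, Pi.single_apply]

theorem linearIndependent_iff_lexForms_injective {v : ι → κ → ℝ} :
    LinearIndependent ℤ (fun j i ↦ v i j) ↔ Function.Injective (lexForms v) := by
  rw [Fintype.linearIndependent_iff, injective_iff_map_eq_zero]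
  simp [lexForms, funext_iff]

theorem linearIndependent_rat_iff_forall_exists_sum_ne_zero {v : ι → κ → ℝ} :
    LinearIndependent ℚ (fun j i ↦ v i j) ↔
      ∀ c : κ → ℚ, c ≠ 0 → ∃ i, ∑ j, (c j : ℝ) * v i j ≠ 0 := by
  rw [Fintype.linearIndependent_iff]
  refine forall_congr' fun c ↦ ?_
  rw [← not_imp_not]
  simp [Rat.smul_def, funext_iff]

theorem lexForms_injective_iff {v : ι → κ → ℝ} :
    Function.Injective (lexForms v) ↔
      ∀ c : κ → ℚ, c ≠ 0 → ∃ i, ∑ j, (c j : ℝ) * v i j ≠ 0 := by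
  rw [← linearIndependent_iff_lexForms_injective, LinearIndependent.iff_fractionRing ℤ ℚ,
    linearIndependent_rat_iff_forall_exists_sum_ne_zero]

end LexForms

/-- Every additive total order on `ℤ^r` is given by lexicographic comparison of the values
of `s` linear forms (`1 ≤ s ≤ r`) whose span is not contained in any rational hyperplane;
conversely any such family of linear forms defines an additive total order on `ℤ^r`. -/
theorem stmt7 (r : ℕ) (hr : 1 ≤ r) :
    (∀ R : (Fin r → ℤ) → (Fin r → ℤ) → Prop,
      Reflexive R → Transitive R → (∀ m n, R m n ∨ R n m) →
      (∀ m n o, R m n → R (m + o) (n + o)) →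
      (∀ m n, R m n → R n m → m = n) →
      ∃ s : ℕ, 1 ≤ s ∧ s ≤ r ∧ ∃ v : Fin s → (Fin r → ℝ),
        (∀ c : Fin r → ℚ, c ≠ 0 → ∃ i, ∑ j, (c j : ℝ) * v i j ≠ 0) ∧
        (∀ m n, R m n ↔
          lexLE (fun i => ∑ j, (m j : ℝ) * v i j) (fun i => ∑ j, (n j : ℝ) * v i j))) ∧
    (∀ s : ℕ, ∀ v : Fin s → (Fin r → ℝ),
      (∀ c : Fin r → ℚ, c ≠ 0 → ∃ i, ∑ j, (c j : ℝ) * v i j ≠ 0) →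
      ∀ R : (Fin r → ℤ) → (Fin r → ℤ) → Prop,
        (∀ m n, R m n ↔
          lexLE (fun i => ∑ j, (m j : ℝ) * v i j) (fun i => ∑ j, (n j : ℝ) * v i j)) →
        Reflexive R ∧ Transitive R ∧ (∀ m n, R m n ∨ R n m) ∧
        (∀ m n o, R m n → R (m + o) (n + o)) ∧ (∀ m n, R m n → R n m → m = n)) := by
  simp only [lexLE_iff_lexForms_le, ← lexForms_injective_iff]
  constructor
  · intro R _ htrans htotal hadd hanti
    obtain ⟨s, hs, φ, hφ, hR⟩ :=
      exists_addMonoidHom_lex_of_total (R := R) (fun _ _ _ h h' ↦ htrans h h') htotal hadd hanti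
    obtain ⟨v, rfl⟩ := exists_lexForms_eq φ
    have : Nonempty (Fin r) := ⟨⟨0, hr⟩⟩
    have hs0 : s ≠ 0 := by
      rintro rfl
      exact not_subsingleton (Fin r → ℤ) hφ.subsingleton
    exact ⟨s, Nat.one_le_iff_ne_zero.2 hs0, by simpa using hs, v, hφ, hR⟩
  · intro s v hv R hR
    obtain rfl : R = fun m n ↦ lexForms v m ≤ lexForms v n := by ext m n; exact hR m n
    exact ⟨fun m ↦ le_rfl, fun l m n ↦ le_trans, fun m n ↦ le_total _ _,
      fun m n o h ↦ by simpa using h, fun m n h h' ↦ hv (h.antisymm h')⟩
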